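/- arXiv:2406.13528 — 2 statements merged into one kernel-verified Lean document; each statement's English description precedes it below -/
import Mathlib

section
/- Let A be a commutative ring and r, s ∈ A. With A_{L,ℓ} denoting the coefficient of z^ℓ in (z + s + r z^{−1})^L, for every integer L ≥ 1 and every integer ℓ one has L · A_{L−1,ℓ} = (ℓ+1) · A_{L,ℓ+1} + r · L · A_{L−1,ℓ+2}, where integer scalars act on A in the canonical way. -/
/-- `Acoef r s L ℓ` is the coefficient of `z^ℓ` in the Laurent polynomial
`(z + s + r·z⁻¹)^L`, computed as the coefficient of `z^(ℓ+L)` in `(z² + s·z + r)^L`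
(it vanishes when `ℓ + L < 0`). -/
noncomputable def Acoef {A : Type*} [CommRing A] (r s : A) (L : ℕ) (ℓ : ℤ) : A :=
  if 0 ≤ ℓ + L then
    ((Polynomial.X ^ 2 + Polynomial.C s * Polynomial.X + Polynomial.C r :
        Polynomial A) ^ L).coeff (ℓ + L).toNat
  else 0

open Polynomial in
/-- The Euler operator `X * d/dX` applied to `(X ^ 2 + s X + r) ^ (n + 1)`. -/
theorem X_mul_derivative_quadratic_pow {A : Type*} [CommRing A] (r s : A) (n : ℕ) :
    X * derivative ((X ^ 2 + C s * X + C r : A[X]) ^ (n + 1)) =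
      C ((n : A) + 1) * ((X ^ 2 + C s * X + C r) ^ (n + 1)
        + (X ^ 2 + C s * X + C r) ^ n * X ^ 2 - C r * (X ^ 2 + C s * X + C r) ^ n) := by
  rw [derivative_pow_succ]
  simp only [derivative_X_sq, derivative_C_mul_X, derivative_C, map_add,
    map_natCast, map_one, map_ofNat]
  ring

open Polynomial in
/-- The coefficientwise form of `X_mul_derivative_quadratic_pow`. -/
theorem natCast_mul_coeff_quadratic_pow_succ {A : Type*} [CommRing A] (r s : A) (n m : ℕ) :
    (m : A) * ((X ^ 2 + C s * X + C r : A[X]) ^ (n + 1)).coeff m =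
      ((n : A) + 1) * (((X ^ 2 + C s * X + C r : A[X]) ^ (n + 1)).coeff m
        + (if 2 ≤ m then ((X ^ 2 + C s * X + C r : A[X]) ^ n).coeff (m - 2) else 0)
        - r * ((X ^ 2 + C s * X + C r : A[X]) ^ n).coeff m) := by
  have h := congrArg (fun p : A[X] => p.coeff m) (X_mul_derivative_quadratic_pow r s n)
  simp only [coeff_C_mul, coeff_sub, coeff_add, coeff_mul_X_pow'] at h
  rw [← h]
  cases m with
  | zero => simp
  | succ k => rw [coeff_X_mul, coeff_derivative]; push_cast; ring

/-- `L·A_{L−1,ℓ} = (ℓ+1)·A_{L,ℓ+1} + r·L·A_{L−1,ℓ+2}` for `L ≥ 1` and `ℓ : ℤ`,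
where integer scalars act canonically. -/
theorem stmt_2 {A : Type*} [CommRing A] (r s : A) (L : ℕ) (hL : 1 ≤ L) (ℓ : ℤ) :
    (L : ℤ) • Acoef r s (L - 1) ℓ =
      (ℓ + 1) • Acoef r s L (ℓ + 1) + r * ((L : ℤ) • Acoef r s (L - 1) (ℓ + 2)) := by
  obtain ⟨n, rfl⟩ := Nat.exists_eq_add_of_le' hL
  simp only [Nat.add_sub_cancel, Acoef]
  rcases lt_or_ge (ℓ + n + 2) 0 with hneg | hnonneg
  · rw [if_neg (by lia), if_neg (by lia), if_neg (by lia)]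
    simp
  obtain ⟨m, hm⟩ := Int.eq_ofNat_of_zero_le hnonneg
  have hℓ : ℓ = (m : ℤ) - n - 2 := by lia
  have h := natCast_mul_coeff_quadratic_pow_succ r s n m
  have hsucc : (ℓ + 1 + ((n + 1 : ℕ) : ℤ)).toNat = m := by lia
  have htwo : (ℓ + 2 + (n : ℤ)).toNat = m := by lia
  have hzero : (ℓ + (n : ℤ)).toNat = m - 2 := by lia
  have hcond : 0 ≤ ℓ + (n : ℤ) ↔ 2 ≤ m := by lia
  rw [if_pos (show 0 ≤ ℓ + 1 + ((n + 1 : ℕ) : ℤ) by lia),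
    if_pos (show 0 ≤ ℓ + 2 + (n : ℤ) by lia), hsucc, htwo, hzero]
  simp only [hcond, zsmul_eq_mul]
  rw [hℓ]
  push_cast
  linear_combination -h
end

section
/- Let d be a nonnegative integer and let P ∈ ℚ[X] be a polynomial of degree at most 2d+1. In the field ℚ((t)) of formal Laurent series in t, set F := Σ_{n≥0} P(n) t^{n+1} and N := (t^{−1} − 1)^{2d+2} · F, and for each integer i let N_i denote the coefficient of t^{−i} in N (so N_i = 0 unless 0 ≤ i ≤ 2d+1). Then P is an odd polynomial (i.e. P(−X) = −P(X)) if and only if N is self-reciprocal of degree 2d, i.e. N_i = N_{2d−i} for every integer i (in particular N_{2d+1} = 0). -/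
open scoped fwdDiff

section ForwardDifference

variable {G : Type*} [AddCommGroup G]

lemma fwdDiff_iter_sub {M : Type*} [AddCommMonoid M] (h : M) (f g : M → G) (n : ℕ) :
    (Δ_[h])^[n] (f - g) = (Δ_[h])^[n] f - (Δ_[h])^[n] g := by
  simpa only [fwdDiff_aux.coe_fwdDiffₗ_pow] using map_sub (fwdDiff_aux.fwdDiffₗ M G h ^ n) f g

lemma fwdDiff_iter_comp_const_sub {M : Type*} [AddCommGroup M] (h : M) (f : M → G) (c : M)
    (n : ℕ) (y : M) :
    (Δ_[h])^[n] (fun x ↦ f (c - x)) y = (-1 : ℤ) ^ n • (Δ_[h])^[n] f (c - y - n • h) := by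
  induction n generalizing y with
  | zero => simp
  | succ n ih =>
    rw [Function.iterate_succ_apply', Function.iterate_succ_apply', fwdDiff, fwdDiff, ih, ih,
      pow_succ, mul_neg_one, neg_smul, ← smul_neg, neg_sub, smul_sub, succ_nsmul]
    congr 3 <;> abel_nf

/-- A function on `ℤ` annihilated by a power of the forward difference operator is determined by
its values on any right half-line. -/
lemma eq_zero_of_fwdDiff_iter_eq_zero {u : ℤ → G} {a : ℤ} (n : ℕ) (hu : ∀ x, a ≤ x → u x = 0)
    (hn : (Δ_[1])^[n] u = 0) : u = 0 := by
  induction n generalizing u with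
  | zero => simpa using hn
  | succ n ih =>
    have hΔ : Δ_[1] u = 0 := ih
      (fun x hx ↦ by rw [fwdDiff, hu x hx, hu (x + 1) (by lia), sub_zero]) hn
    have hstep (x : ℤ) : u (x + 1) = u x := sub_eq_zero.mp (congrFun hΔ x)
    funext x
    obtain hx | hx := le_total a x
    · exact hu x hx
    · induction x, hx using Int.leInductionDown with
      | base => exact hu a le_rfl
      | pred x _ ih => simpa [← hstep (x - 1)] using ih

lemma fwdDiff_iter_comp_intCast {R : Type*} [Ring R] (f : R → G) (n : ℕ) (y : ℤ) :
    (Δ_[1])^[n] (fun x : ℤ ↦ f x) y = (Δ_[1])^[n] f (y : R) := by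
  simp [fwdDiff_iter_eq_sum_shift]

end ForwardDifference

lemma HahnSeries.coeff_single_neg_one_sub_one_pow_mul {R : Type*} [Ring R] (F : LaurentSeries R)
    (n : ℕ) : ((single (-1 : ℤ) (1 : R) - 1) ^ n * F).coeff = (Δ_[1])^[n] F.coeff := by
  induction n with
  | zero => simp
  | succ n ih =>
    rw [Function.iterate_succ_apply', ← ih, pow_succ', mul_assoc]
    funext j
    simp [fwdDiff, sub_mul, coeff_single_mul]

lemma LaurentSeries.coeff_X_mul_mk {R : Type*} [CommRing R] (P : Polynomial R) (n : ℤ) :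
    (HahnSeries.ofPowerSeries ℤ R
      (PowerSeries.X * PowerSeries.mk fun n : ℕ ↦ P.eval (n : R))).coeff n =
      if 1 ≤ n then P.eval ((n : R) - 1) else 0 := by
  rw [PowerSeries.coeff_coe]
  obtain hn | rfl | hn := lt_trichotomy n 0
  · rw [if_pos hn, if_neg (by lia)]
  · simp
  · obtain ⟨k, rfl⟩ : ∃ k : ℕ, n = (k + 1 : ℕ) := ⟨(n - 1).toNat, by lia⟩
    rw [if_neg (by lia), if_pos (by lia), Int.natAbs_natCast, PowerSeries.coeff_succ_X_mul]
    simp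

lemma Polynomial.eval_neg_eq_neg_eval_of_natCast {R : Type*} [CommRing R] [IsDomain R] [CharZero R]
    {P : Polynomial R} (h : ∀ s : ℕ, 1 ≤ s → P.eval (-(s : R)) = -P.eval (s : R)) (x : R) :
    P.eval (-x) = -P.eval x := by
  have key : P.comp (-X) = -P := by
    apply eq_of_infinite_eval_eq
    refine ((Set.Ici_infinite 1).image (Nat.cast_injective (R := R)).injOn).mono ?_
    rintro _ ⟨s, hs, rfl⟩
    simpa using h s hs
  simpa using congrArg (eval x) key

/-- with `t = z⁻¹`, let `F = Σ_{n≥0} P(n) t^{n+1} ∈ ℚ((t))`,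
`N = (t⁻¹ − 1)^{2d+2} · F`, and `N_i` the coefficient of `t^{−i}` in `N`.
If `deg P ≤ 2d+1`, then `P` is odd if and only if `N_i = N_{2d−i}` for all `i : ℤ`. -/
theorem stmt_5 (d : ℕ) (P : Polynomial ℚ) (hP : P.degree ≤ (2 * d + 1 : ℕ)) :
    let F : LaurentSeries ℚ := (HahnSeries.ofPowerSeries ℤ ℚ)
      ((PowerSeries.X : PowerSeries ℚ) * PowerSeries.mk (fun n => P.eval (n : ℚ)))
    let N : LaurentSeries ℚ := (HahnSeries.single (-1 : ℤ) (1 : ℚ) - 1) ^ (2 * d + 2) * F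
    ((∀ x : ℚ, P.eval (-x) = - P.eval x) ↔
      ∀ i : ℤ, N.coeff (-i) = N.coeff (-(2 * (d : ℤ) - i))) := by
  intro F N
  have hF (n : ℤ) : F.coeff n = if 1 ≤ n then P.eval ((n : ℚ) - 1) else 0 :=
    LaurentSeries.coeff_X_mul_mk P n
  have hN : N.coeff = (Δ_[1])^[2 * d + 2] F.coeff :=
    HahnSeries.coeff_single_neg_one_sub_one_pow_mul F _
  let r : ℤ → ℚ := fun n ↦ F.coeff (2 - n)
  let p : ℤ → ℚ := fun n ↦ P.eval ((n : ℚ) - 1)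
  have hp : (Δ_[1])^[2 * d + 2] p = 0 := by
    funext y
    have hdeg : (P.comp (.X - .C 1)).natDegree < 2 * d + 2 := by
      rw [Polynomial.natDegree_comp, Polynomial.natDegree_X_sub_C, mul_one]
      have := Polynomial.natDegree_le_of_degree_le hP
      lia
    have := fwdDiff_iter_comp_intCast (P.comp (.X - .C 1)).eval (2 * d + 2) y
    rw [Polynomial.fwdDiff_iter_eq_zero_of_degree_lt hdeg] at this
    simpa [p] using this
  have hsymm : (∀ i : ℤ, N.coeff (-i) = N.coeff (-(2 * (d : ℤ) - i))) ↔
      (Δ_[1])^[2 * d + 2] (F.coeff - r) = 0 := by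
    have hr (i : ℤ) : (Δ_[1])^[2 * d + 2] r (-i) = N.coeff (-(2 * (d : ℤ) - i)) := by
      rw [fwdDiff_iter_comp_const_sub, Even.neg_one_pow (by simp [Nat.even_add]), one_smul, hN]
      exact congrArg _ (by push_cast [nsmul_eq_mul]; ring)
    rw [fwdDiff_iter_sub, sub_eq_zero, funext_iff, ← hN]
    simp only [← hr]
    exact (neg_surjective.forall (p := fun x ↦ N.coeff x = (Δ_[1])^[2 * d + 2] r x)).symm
  rw [hsymm]
  constructor
  · intro hodd
    have h0 : P.eval 0 = 0 := by
      have := hodd 0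
      rw [neg_zero] at this
      linarith
    suffices F.coeff - r = p by rw [this, hp]
    funext n
    simp only [Pi.sub_apply, r, p, hF]
    have hneg : P.eval (((2 - n : ℤ) : ℚ) - 1) = -P.eval ((n : ℚ) - 1) := by
      rw [← hodd]
      congr 1
      push_cast
      ring
    obtain hn | rfl | hn := lt_trichotomy n 1
    · rw [if_neg (by lia), if_pos (by lia), hneg, zero_sub, neg_neg]
    · simp [h0]
    · rw [if_pos (by lia), if_neg (by lia), sub_zero]
  · intro h
    have hu : F.coeff - r - p = 0 := by
      refine eq_zero_of_fwdDiff_iter_eq_zero (a := 2) (2 * d + 2) (fun x hx ↦ ?_) ?_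
      · simp only [Pi.sub_apply, r, p, hF]
        rw [if_pos (by lia), if_neg (by lia), sub_zero, sub_self]
      · rw [fwdDiff_iter_sub, h, hp, sub_zero]
    refine Polynomial.eval_neg_eq_neg_eval_of_natCast fun s hs ↦ ?_
    have := congrFun hu (1 - s)
    simp only [Pi.sub_apply, r, p, hF, Pi.zero_apply] at this
    rw [if_neg (by lia), if_pos (by lia)] at this
    push_cast at this
    ring_nf at this ⊢
    linarith
end
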